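/- arXiv:1703.04999 — 2 statements merged into one kernel-verified Lean document; each statement's English description precedes it below -/
import Mathlib

section
/- Let r₀ > 0 and let γ_R ∈ ℝ with γ_R ∉ ℤ. Define for l ∈ ℤ the free Regge interpolation values σ₀(l) = −e^{iπγ_R}·H^{(2)}_{l−γ_R}(r₀)/H^{(1)}_{l−γ_R}(r₀). Then σ₀(l) → e^{iπγ_R} as l → +∞ and σ₀(l) → e^{−iπγ_R} as l → −∞. -/
/-!
For `ν ∉ ℤ` and `x = r / 2` one has `J_ν(r) = x ^ ν / Γ(ν + 1) * F(ν)`, where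
`F(ν) = ∑ (-x²)^k / (k! (ν+1)(ν+2)⋯(ν+k))` (`besselJ_eq`). If `ν` moves within a fixed nonintegral
class modulo `ℤ`, every factor `ν + j` stays at distance at least some `δ > 0` from `0`, so the
`k`-th term of `F` is dominated by `(x²/δ)^k / k!`; dominated convergence gives `F(ν) → 1` as
`|ν| → ∞`, in both directions (`tendsto_besselF`). Moreover `x^{2ν} Γ(1-ν) / Γ(1+ν) → 0` as
`ν → +∞`, since its successive ratios `-x² / (ν (ν + 1))` tend to `0` (`tendsto_gammaRatio`).
Hence `J_ν / J_{-ν} → 0` as `ν → +∞` (`tendsto_besselJ_ratio`).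

Both limits follow by dividing the numerator and the denominator of `H²/H¹` by the dominant one of
`J_ν`, `J_{-ν}`; the phases `e^{±iπν}` have modulus one, and `e^{2iπν} = e^{-2iπγ}` for
`ν = l - γ`.
-/

/-- `x^w = exp(w * log x)` with the real logarithm, for `x > 0`. -/
noncomputable def cpowR (x : ℝ) (w : ℂ) : ℂ := Complex.exp (w * (Real.log x : ℂ))

/-- Bessel function of the first kind, defined by its power series. -/
noncomputable def besselJ (ν : ℂ) (r : ℝ) : ℂ :=
  ∑' k : ℕ, (-1 : ℂ) ^ k * cpowR (r / 2) (ν + 2 * k) /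
    (Complex.Gamma (k + 1) * Complex.Gamma (k + ν + 1))

/-- Hankel function of the first kind, for `ν ∉ ℤ`. -/
noncomputable def hankel1 (ν : ℂ) (r : ℝ) : ℂ :=
  (besselJ (-ν) r - Complex.exp (-(Real.pi * Complex.I * ν)) * besselJ ν r) /
    (Complex.I * Complex.sin (Real.pi * ν))

/-- Hankel function of the second kind, for `ν ∉ ℤ`. -/
noncomputable def hankel2 (ν : ℂ) (r : ℝ) : ℂ :=
  (Complex.exp (Real.pi * Complex.I * ν) * besselJ ν r - besselJ (-ν) r) /
    (Complex.I * Complex.sin (Real.pi * ν))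

open Filter Topology

/-- The power series factor of the Bessel function, `J_ν(2x) = x ^ ν / Γ(ν + 1) * besselF x ν`. -/
noncomputable def besselF (x : ℝ) (ν : ℂ) : ℂ :=
  ∑' k : ℕ, (-(x : ℂ) ^ 2) ^ k / ((k.factorial : ℂ) * ∏ j ∈ Finset.range k, (ν + 1 + j))

lemma cpowR_add (x : ℝ) (a b : ℂ) : cpowR x (a + b) = cpowR x a * cpowR x b := by
  simp [cpowR, add_mul, Complex.exp_add]

lemma cpowR_ne_zero (x : ℝ) (a : ℂ) : cpowR x a ≠ 0 := Complex.exp_ne_zero _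

lemma cpowR_two_mul_nat {x : ℝ} (hx : 0 < x) (k : ℕ) : cpowR x (2 * k) = ((x : ℂ) ^ 2) ^ k := by
  have h : (x : ℂ) = Complex.exp (Real.log x : ℂ) := by
    rw [← Complex.ofReal_exp, Real.exp_log hx]
  rw [← pow_mul]
  conv_rhs => rw [h]
  rw [← Complex.exp_nat_mul, cpowR]
  push_cast
  rfl

lemma Gamma_shift (ν : ℂ) (h : ∀ j : ℕ, ν + 1 + j ≠ 0) (k : ℕ) :
    Complex.Gamma (k + ν + 1) =
      Complex.Gamma (ν + 1) * ∏ j ∈ Finset.range k, (ν + 1 + j) := by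
  induction k with
  | zero => simp
  | succ k ih =>
    rw [Finset.prod_range_succ, ← mul_assoc, ← ih, mul_comm,
      show ν + 1 + (k : ℂ) = k + ν + 1 by ring, ← Complex.Gamma_add_one]
    · congr 1; push_cast; ring
    · rw [show (k : ℂ) + ν + 1 = ν + 1 + k by ring]; exact h k

lemma besselJ_eq {r : ℝ} (hr : 0 < r) (ν : ℂ) (h : ∀ j : ℕ, ν + 1 + j ≠ 0) :
    besselJ ν r = cpowR (r / 2) ν / Complex.Gamma (ν + 1) * besselF (r / 2) ν := by
  rw [besselJ, besselF, ← tsum_mul_left]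
  congr 1
  ext k
  rw [cpowR_add, cpowR_two_mul_nat (by positivity), Gamma_shift ν h, Complex.Gamma_nat_eq_factorial,
    neg_pow ((((r / 2 : ℝ) : ℂ)) ^ 2) k]
  simp only [div_eq_mul_inv, mul_inv]
  ring

lemma tendsto_besselF (x : ℝ) (ν : ℕ → ℂ) {δ : ℝ} (hδ : 0 < δ)
    (hν : Tendsto (fun n => ‖ν n‖) atTop atTop) (h : ∀ n j : ℕ, δ ≤ ‖ν n + 1 + j‖) :
    Tendsto (fun n => besselF x (ν n)) atTop (𝓝 1) := by
  have hprod : ∀ n k : ℕ, δ ^ k ≤ ‖∏ j ∈ Finset.range k, (ν n + 1 + j)‖ := by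
    intro n k
    rw [norm_prod]
    calc δ ^ k = ∏ j ∈ Finset.range k, δ := by simp
      _ ≤ _ := Finset.prod_le_prod (fun _ _ => hδ.le) (fun j _ => h n j)
  have hlim : (1 : ℂ) = ∑' k : ℕ, if k = 0 then (1 : ℂ) else 0 := by simp
  rw [hlim]
  refine tendsto_tsum_of_dominated_convergence
    (bound := fun k : ℕ => (x ^ 2 / δ) ^ k / (k.factorial : ℝ))
    (Real.summable_pow_div_factorial _) ?_ ?_
  · intro k
    rcases k with _ | k
    · simp
    · simp only [Nat.succ_ne_zero, if_false]
      -- Only the first factor `ν + 1` is needed for the decay; the others are at least `δ`.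
      have h1 : Tendsto (fun n => ‖ν n + 1‖) atTop atTop := by
        refine tendsto_atTop_mono (fun n => ?_) (tendsto_atTop_add_const_right _ (-1) hν)
        have := norm_sub_le (ν n + 1) 1
        simp only [add_sub_cancel_right, norm_one] at this
        linarith
      rw [tendsto_zero_iff_norm_tendsto_zero]
      have h2 : Tendsto (fun n => (‖(-(x : ℂ) ^ 2) ^ (k + 1)‖ / (((k + 1).factorial : ℝ) * δ ^ k))
          / ‖ν n + 1‖) atTop (𝓝 0) := h1.const_div_atTop _
      refine squeeze_zero (fun _ => norm_nonneg _) (fun n => ?_) h2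
      have hpos : 0 < ‖ν n + 1‖ := by
        have := h n 0
        simp only [Nat.cast_zero, add_zero] at this
        linarith
      rw [norm_div, norm_mul, Complex.norm_natCast, div_div, Finset.prod_range_succ', norm_mul,
        mul_assoc]
      simp only [Nat.cast_zero, add_zero]
      have h3 : δ ^ k ≤ ‖∏ j ∈ Finset.range k, (ν n + 1 + ((j + 1 : ℕ) : ℂ))‖ := by
        rw [norm_prod]
        calc δ ^ k = ∏ j ∈ Finset.range k, δ := by simp
          _ ≤ _ := Finset.prod_le_prod (fun _ _ => hδ.le) (fun j _ => h n (j + 1))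
      gcongr
  · refine Eventually.of_forall fun n k => ?_
    rw [norm_div, norm_mul, Complex.norm_natCast, norm_pow, norm_neg, norm_pow, Complex.norm_real,
      Real.norm_eq_abs, sq_abs, div_pow, div_div, mul_comm (δ ^ k)]
    gcongr
    exact hprod n k

lemma exists_dist_int (α : ℝ) (hα : ∀ n : ℤ, α ≠ n) : ∃ δ > 0, ∀ n : ℤ, δ ≤ ‖(α : ℂ) + n‖ := by
  refine ⟨|α - round α|, abs_pos.2 (sub_ne_zero.2 (hα _)), fun n => ?_⟩
  have h := round_le α (-n)
  rw [show (α : ℂ) + n = ((α - ((-n : ℤ) : ℝ) : ℝ) : ℂ) by push_cast; ring, Complex.norm_real,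
    Real.norm_eq_abs]
  exact h

lemma tendsto_norm_natCast_add (β : ℂ) : Tendsto (fun n : ℕ => ‖(n : ℂ) + β‖) atTop atTop := by
  refine tendsto_atTop_mono (fun n => ?_)
    (tendsto_atTop_add_const_right _ (-‖β‖) (tendsto_natCast_atTop_atTop (R := ℝ)))
  have := norm_sub_le ((n : ℂ) + β) β
  simp only [add_sub_cancel_right, Complex.norm_natCast] at this
  linarith

/-- The prefactor of `J_ν / J_{-ν}` vanishes as `ν = n + α → +∞`, by the ratio test. -/
lemma tendsto_gammaRatio {x : ℝ} (hx : 0 < x) (α : ℂ) (hα : ∀ n : ℤ, α + n ≠ 0) :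
    Tendsto (fun n : ℕ => cpowR x (2 * (n + α)) * Complex.Gamma (1 - (n + α)) /
      Complex.Gamma (1 + (n + α))) atTop (𝓝 0) := by
  set g : ℕ → ℂ := fun n : ℕ => cpowR x (2 * (n + α)) * Complex.Gamma (1 - (n + α)) /
      Complex.Gamma (1 + (n + α)) with hg
  have hG1 : ∀ n : ℕ, Complex.Gamma (1 - (n + α)) ≠ 0 := fun n =>
    Complex.Gamma_ne_zero fun m hm => hα (n - 1 - m) (by push_cast; linear_combination -hm)
  have hG2 : ∀ n : ℕ, Complex.Gamma (1 + (n + α)) ≠ 0 := fun n =>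
    Complex.Gamma_ne_zero fun m hm => hα (n + 1 + m) (by push_cast; linear_combination hm)
  have hg0 : ∀ n, g n ≠ 0 := fun n =>
    div_ne_zero (mul_ne_zero (cpowR_ne_zero _ _) (hG1 n)) (hG2 n)
  have hn0 : ∀ n : ℕ, (n : ℂ) + α ≠ 0 := fun n h => hα n (by push_cast; rw [add_comm]; exact h)
  have hn1 : ∀ n : ℕ, 1 + ((n : ℂ) + α) ≠ 0 := fun n h =>
    hα (n + 1) (by push_cast; linear_combination h)
  have hrec : ∀ n, g (n + 1) = g n * (-(x : ℂ) ^ 2 / ((n + α) * (n + (1 + α)))) := by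
    intro n
    have e1 : Complex.Gamma (1 - (n + α)) = -(n + α) * Complex.Gamma (-(n + α)) := by
      rw [← Complex.Gamma_add_one _ (neg_ne_zero.2 (hn0 n))]; congr 1; ring
    have e2 : Complex.Gamma (1 + ((n + 1 : ℕ) + α)) =
        (1 + (n + α)) * Complex.Gamma (1 + (n + α)) := by
      rw [← Complex.Gamma_add_one _ (hn1 n)]; congr 1; push_cast; ring
    have e3 : cpowR x (2 * ((n + 1 : ℕ) + α)) = cpowR x (2 * (n + α)) * (x : ℂ) ^ 2 := by
      have := cpowR_two_mul_nat hx 1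
      rw [pow_one] at this
      rw [← this, ← cpowR_add]; congr 1; push_cast; ring
    have e4 : Complex.Gamma (1 - ((n + 1 : ℕ) + α)) = Complex.Gamma (-(n + α)) := by
      congr 1; push_cast; ring
    have hn1' : (n : ℂ) + (1 + α) ≠ 0 := by
      have := hn1 n
      rwa [show 1 + ((n : ℂ) + α) = n + (1 + α) by ring] at this
    simp only [hg]
    rw [e2, e3, e4, e1]
    have a := hn0 n
    have b := hn1 n
    have c := hG2 n
    rw [show 1 + ((n : ℂ) + α) = n + (1 + α) by ring] at *
    field_simp
  have hratio : Tendsto (fun n => ‖g (n + 1)‖ / ‖g n‖) atTop (𝓝 0) := by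
    have h : Tendsto (fun n : ℕ => ‖-(x : ℂ) ^ 2‖ / (‖(n : ℂ) + α‖ * ‖(n : ℂ) + (1 + α)‖)) atTop
        (𝓝 0) :=
      ((tendsto_norm_natCast_add α).atTop_mul_atTop₀ (tendsto_norm_natCast_add (1 + α))).const_div_atTop
        _
    refine h.congr fun n => ?_
    rw [hrec, norm_mul, mul_div_cancel_left₀ _ (norm_ne_zero_iff.2 (hg0 n)), norm_div, norm_mul]
  exact (summable_of_ratio_test_tendsto_lt_one zero_lt_one
    (Eventually.of_forall hg0) hratio).tendsto_atTop_zero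

/-- `J_{-ν}` dominates `J_ν` as `ν = n + α → +∞`. The nonvanishing of `J_{-ν}` is part of the
claim, as the quotient would otherwise be a junk value. -/
lemma tendsto_besselJ_ratio {r : ℝ} (hr : 0 < r) (α : ℝ) (hα : ∀ n : ℤ, α ≠ n) :
    (∀ᶠ n : ℕ in atTop, besselJ (-(n + α)) r ≠ 0) ∧
    Tendsto (fun n : ℕ => besselJ (n + α) r / besselJ (-(n + α)) r) atTop (𝓝 0) := by
  obtain ⟨δ, hδ, h⟩ := exists_dist_int α hα
  have hne : ∀ n : ℤ, (α : ℂ) + n ≠ 0 := fun n hn => by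
    have := h n
    rw [hn, norm_zero] at this
    linarith
  have hp : ∀ n j : ℕ, δ ≤ ‖((n : ℂ) + α) + 1 + j‖ := fun n j => by
    have := h (n + 1 + j)
    rwa [show (α : ℂ) + ((n + 1 + j : ℤ) : ℂ) = (n + α) + 1 + j by push_cast; ring] at this
  have hm : ∀ n j : ℕ, δ ≤ ‖-((n : ℂ) + α) + 1 + j‖ := fun n j => by
    have := h (n - 1 - j)
    rwa [← norm_neg, show -((α : ℂ) + ((n - 1 - j : ℤ) : ℂ)) = -(n + α) + 1 + j by
      push_cast; ring] at this
  have hp0 : ∀ n j : ℕ, ((n : ℂ) + α) + 1 + j ≠ 0 := fun n j =>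
    norm_pos_iff.1 (hδ.trans_le (hp n j))
  have hm0 : ∀ n j : ℕ, -((n : ℂ) + α) + 1 + j ≠ 0 := fun n j =>
    norm_pos_iff.1 (hδ.trans_le (hm n j))
  have hnorm := tendsto_norm_natCast_add (α : ℂ)
  have hFp := tendsto_besselF (r / 2) (fun n : ℕ => (n : ℂ) + α) hδ hnorm hp
  have hFm := tendsto_besselF (r / 2) (fun n : ℕ => -((n : ℂ) + α)) hδ
    (by simpa only [norm_neg] using hnorm) hm
  have hG : ∀ n : ℕ, Complex.Gamma (-((n : ℂ) + α) + 1) ≠ 0 := fun n =>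
    Complex.Gamma_ne_zero fun m e => hm0 n m (by rw [e]; ring)
  constructor
  · filter_upwards [hFm.eventually_ne one_ne_zero] with n hn
    rw [besselJ_eq hr _ (hm0 n)]
    exact mul_ne_zero (div_ne_zero (cpowR_ne_zero _ _) (hG n)) hn
  · have := (tendsto_gammaRatio (half_pos hr) (α : ℂ) hne).mul (hFp.div hFm one_ne_zero)
    rw [zero_mul] at this
    refine this.congr fun n => ?_
    rw [besselJ_eq hr _ (hm0 n), besselJ_eq hr _ (hp0 n)]
    have e : cpowR (r / 2) (2 * (n + α)) * cpowR (r / 2) (-(n + α)) = cpowR (r / 2) (n + α) := by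
      rw [← cpowR_add]; congr 1; ring
    rw [← e, sub_eq_add_neg, add_comm (1 : ℂ), add_comm (1 : ℂ)]
    have c := cpowR_ne_zero (r / 2) (-(n + α))
    simp only [Pi.div_apply, div_eq_mul_inv, mul_inv, inv_inv]
    field_simp

lemma hankel_ratio (ν : ℂ) (r : ℝ) (h : ∀ n : ℤ, ν ≠ n) :
    hankel2 ν r / hankel1 ν r =
      (Complex.exp (Real.pi * Complex.I * ν) * besselJ ν r - besselJ (-ν) r) /
      (besselJ (-ν) r - Complex.exp (-(Real.pi * Complex.I * ν)) * besselJ ν r) := by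
  have hs : Complex.I * Complex.sin (Real.pi * ν) ≠ 0 := by
    refine mul_ne_zero Complex.I_ne_zero (Complex.sin_ne_zero_iff.2 fun k hk => h k ?_)
    have hpi : (Real.pi : ℂ) ≠ 0 := Complex.ofReal_ne_zero.2 Real.pi_ne_zero
    exact mul_left_cancel₀ hpi (by rw [hk]; ring)
  rw [hankel1, hankel2, div_div_div_cancel_right₀ hs]

lemma tendsto_phase_mul {e q : ℕ → ℂ} (he : ∀ n, ‖e n‖ = 1) (hq : Tendsto q atTop (𝓝 0)) :
    Tendsto (fun n => e n * q n) atTop (𝓝 0) := by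
  rw [tendsto_zero_iff_norm_tendsto_zero] at hq ⊢
  simpa [he] using hq

/-- the free Regge interpolation values
`σ₀(l) = −e^{iπγ_R}·H²_{l−γ_R}(r₀)/H¹_{l−γ_R}(r₀)` satisfy `σ₀(l) → e^{iπγ_R}` as
`l → +∞` and `σ₀(l) → e^{−iπγ_R}` as `l → −∞`. -/
theorem regge_free_limits (r₀ γR : ℝ) (h0 : 0 < r₀) (hγ : ∀ n : ℤ, γR ≠ (n : ℝ)) :
    Filter.Tendsto
        (fun l : ℤ => -Complex.exp (Real.pi * Complex.I * γR) *
          hankel2 ((l : ℂ) - γR) r₀ / hankel1 ((l : ℂ) - γR) r₀)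
        Filter.atTop (nhds (Complex.exp (Real.pi * Complex.I * γR))) ∧
    Filter.Tendsto
        (fun l : ℤ => -Complex.exp (Real.pi * Complex.I * γR) *
          hankel2 ((l : ℂ) - γR) r₀ / hankel1 ((l : ℂ) - γR) r₀)
        Filter.atBot (nhds (Complex.exp (-(Real.pi * Complex.I * γR)))) := by
  have hν : ∀ l n : ℤ, (l : ℂ) - γR ≠ n := fun l n h => hγ (l - n) (by
    have : (γR : ℂ) = ((l - n : ℤ) : ℝ) := by push_cast; linear_combination -h
    exact_mod_cast this)
  have hphase : ∀ t : ℝ, ‖Complex.exp (Real.pi * Complex.I * t)‖ = 1 := fun t => by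
    rw [show (Real.pi * Complex.I * t : ℂ) = ((Real.pi * t : ℝ) : ℂ) * Complex.I by push_cast; ring]
    exact Complex.norm_exp_ofReal_mul_I _
  simp_rw [mul_div_assoc, hankel_ratio _ r₀ (hν _)]
  constructor
  · rw [← Nat.map_cast_int_atTop, tendsto_map'_iff]
    obtain ⟨hne, hq⟩ := tendsto_besselJ_ratio h0 (-γR)
      (fun n h => hγ (-n) (by push_cast; linarith))
    simp only [Complex.ofReal_neg, ← sub_eq_add_neg] at hne hq
    have h1 := tendsto_phase_mul
      (e := fun n : ℕ => Complex.exp (Real.pi * Complex.I * ((n : ℂ) - γR)))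
      (fun n => by have := hphase (n - γR); push_cast at this; exact this) hq
    have h2 := tendsto_phase_mul
      (e := fun n : ℕ => Complex.exp (-(Real.pi * Complex.I * ((n : ℂ) - γR))))
      (fun n => by have := hphase (-(n - γR)); push_cast at this; rw [← mul_neg]; exact this) hq
    have h3 := ((h1.sub_const 1).div (h2.const_sub 1) (by simp)).const_mul
      (-Complex.exp (Real.pi * Complex.I * γR))
    have h4 : -Complex.exp (Real.pi * Complex.I * γR) * ((0 - 1) / (1 - 0)) =
        Complex.exp (Real.pi * Complex.I * γR) := by ring
    rw [h4] at h3
    refine h3.congr' ?_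
    filter_upwards [hne] with n hn
    simp only [Function.comp_apply, Int.cast_natCast, Pi.div_apply]
    congr 1
    rw [← mul_div_mul_right _ _ hn]
    congr 1 <;> field_simp
  · rw [← map_neg_atTop, ← Nat.map_cast_int_atTop, map_map, tendsto_map'_iff]
    obtain ⟨hne, hq⟩ := tendsto_besselJ_ratio h0 γR hγ
    have h1 := tendsto_phase_mul
      (e := fun n : ℕ => Complex.exp (Real.pi * Complex.I * (-((n : ℂ) + γR))))
      (fun n => by have := hphase (-(n + γR)); push_cast at this; exact this) hq
    have h3 := ((h1.const_sub (Complex.exp (-(2 * (Real.pi * Complex.I * γR))))).div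
      (h1.sub_const 1) (by simp)).const_mul (-Complex.exp (Real.pi * Complex.I * γR))
    have h4 : -Complex.exp (Real.pi * Complex.I * γR) *
        ((Complex.exp (-(2 * (Real.pi * Complex.I * γR))) - 0) / (0 - 1)) =
        Complex.exp (-(Real.pi * Complex.I * γR)) := by
      rw [show -Complex.exp (Real.pi * Complex.I * γR) *
        ((Complex.exp (-(2 * (Real.pi * Complex.I * γR))) - 0) / (0 - 1)) =
        Complex.exp (Real.pi * Complex.I * γR) *
          Complex.exp (-(2 * (Real.pi * Complex.I * γR))) by ring, ← Complex.exp_add]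
      congr 1; ring
    rw [h4] at h3
    refine h3.congr' ?_
    filter_upwards [hne] with n hn
    simp only [Function.comp_apply, Int.cast_neg, Int.cast_natCast, Pi.div_apply]
    congr 1
    rw [show -(n : ℂ) - γR = -(n + γR) by ring, neg_neg]
    set E := Complex.exp (Real.pi * Complex.I * (-((n : ℂ) + γR))) with hE
    have hE0 : E ≠ 0 := Complex.exp_ne_zero _
    have hE2 : Complex.exp (-(2 * (Real.pi * Complex.I * γR))) = E * E := by
      rw [hE, ← Complex.exp_add, Complex.exp_eq_exp_iff_exists_int]
      exact ⟨n, by push_cast; ring⟩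
    rw [hE2, Complex.exp_neg, ← hE, ← mul_div_mul_right _ _ hn,
      ← mul_div_mul_left (E * _ - _) _ hE0]
    congr 1 <;> field_simp
end

section
/- Let 0 < r₀ < R, let μ ∈ ℂ with Re μ ≥ 0, and let q, q̃ : [r₀,∞) → ℂ be continuous functions vanishing identically on [R,∞). Suppose F⁺, F⁻, F̃⁺, F̃⁻ : [r₀,∞) → ℂ are twice continuously differentiable and satisfy (F^±)''(r) = ((μ²−1/4)/r² + q(r) − 1)·F^±(r) and (F̃^±)''(r) = ((μ²−1/4)/r² + q̃(r) − 1)·F̃^±(r) for all r ≥ r₀, together with the Jost asymptotics F^±(r)·e^{∓ir} → 1, (F^±)'(r)·e^{∓ir} → ±i, F̃^±(r)·e^{∓ir} → 1, (F̃^±)'(r)·e^{∓ir} → ±i as r → ∞. Define the Jost functions α = i·F⁻(r₀), β = −i·F⁺(r₀), α̃ = i·F̃⁻(r₀), β̃ = −i·F̃⁺(r₀), and the regular solutions Φ(r) = i·(F⁻(r₀)·F⁺(r) − F⁺(r₀)·F⁻(r)) and Φ̃(r) = i·(F̃⁻(r₀)·F̃⁺(r) − F̃⁺(r₀)·F̃⁻(r)).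 Then α·β̃ − α̃·β = (1/(2i))·∫_{r₀}^{∞} (q(r) − q̃(r))·Φ(r)·Φ̃(r) dr. -/
/-!
The identity is Lagrange's identity for the cross Wronskian `W = Φ' Φ̃ - Φ Φ̃'` of the two regular
solutions. The equations differ only in their potentials, so `W' = (q - q̃) Φ Φ̃`, which is
continuous and vanishes beyond `R`; hence `∫ (q - q̃) Φ Φ̃ = W(∞) - W(r₀)`. The Dirichlet condition
gives `W(r₀) = 0`. Expanding `Φ = α F⁺ + β F⁻` and `Φ̃ = α̃ F̃⁺ + β̃ F̃⁻`, the Wronskian at infinity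
splits into four Wronskians of Jost solutions: those of equal sign tend to `0`
(`tendsto_wronskian_zero`), those of opposite sign tend to `±2i`
(`tendsto_wronskian_of_mul_eq_one`), so `W(∞) = 2i (α β̃ - α̃ β)`.
-/

open Set Filter MeasureTheory

/-- Wronskian at infinity of two functions with opposite oscillations, normalised by mutually
inverse factors `E`, `E'`. -/
lemma tendsto_wronskian_of_mul_eq_one {u u' v v' E E' : ℝ → ℂ} {a a' b b' : ℂ}
    (hE : ∀ r, E r * E' r = 1)
    (hu : Tendsto (fun r => u r * E r) atTop (nhds a))
    (hu' : Tendsto (fun r => u' r * E r) atTop (nhds a'))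
    (hv : Tendsto (fun r => v r * E' r) atTop (nhds b))
    (hv' : Tendsto (fun r => v' r * E' r) atTop (nhds b')) :
    Tendsto (fun r => u r * v' r - u' r * v r) atTop (nhds (a * b' - a' * b)) := by
  refine ((hu.mul hv').sub (hu'.mul hv)).congr fun r => ?_
  linear_combination (u r * v' r - u' r * v r) * hE r

/-- Wronskian at infinity of two functions with the same oscillation and proportional asymptotic
data. The product of the phases does not converge, but it is unimodular and multiplies a quantity
tending to `0`. -/
lemma tendsto_wronskian_zero {u u' v v' E : ℝ → ℂ} {a a' b b' : ℂ}
    (hE : ∀ r, ‖E r‖ = 1) (hab : a * b' - a' * b = 0)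
    (hu : Tendsto (fun r => u r * E r) atTop (nhds a))
    (hu' : Tendsto (fun r => u' r * E r) atTop (nhds a'))
    (hv : Tendsto (fun r => v r * E r) atTop (nhds b))
    (hv' : Tendsto (fun r => v' r * E r) atTop (nhds b')) :
    Tendsto (fun r => u r * v' r - u' r * v r) atTop (nhds 0) := by
  have h := ((hu.mul hv').sub (hu'.mul hv))
  rw [hab] at h
  rw [tendsto_zero_iff_norm_tendsto_zero] at h ⊢
  refine h.congr fun r => ?_
  have e : u r * E r * (v' r * E r) - u' r * E r * (v r * E r)
      = (u r * v' r - u' r * v r) * (E r * E r) := by ring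
  rw [e, norm_mul, norm_mul, hE]
  ring

/-- algebraic identity for the Jost functions. With `α = i·F⁻(r₀)`,
`β = −i·F⁺(r₀)`, `α̃ = i·F̃⁻(r₀)`, `β̃ = −i·F̃⁺(r₀)` and the regular solutions
`Φ = i·(F⁻(r₀)·F⁺ − F⁺(r₀)·F⁻)`, `Φ̃ = i·(F̃⁻(r₀)·F̃⁺ − F̃⁺(r₀)·F̃⁻)`, one has
`α·β̃ − α̃·β = (1/(2i))·∫_{r₀}^{∞} (q − q̃)·Φ·Φ̃`. -/
theorem jost_function_algebraic_identity (r₀ R : ℝ) (h0 : 0 < r₀) (hrR : r₀ < R)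
    (μ : ℂ) (hμ : 0 ≤ μ.re)
    (q qt : ℝ → ℂ) (hq : ContinuousOn q (Ici r₀)) (hqt : ContinuousOn qt (Ici r₀))
    (hqsupp : ∀ r : ℝ, R ≤ r → q r = 0) (hqtsupp : ∀ r : ℝ, R ≤ r → qt r = 0)
    (Fp Fp' Fm Fm' Gp Gp' Gm Gm' : ℝ → ℂ)
    (hFp : ∀ r ∈ Ici r₀, HasDerivWithinAt Fp (Fp' r) (Ici r₀) r)
    (hFp' : ∀ r ∈ Ici r₀, HasDerivWithinAt Fp'
      (((μ ^ 2 - 1 / 4) / (r : ℂ) ^ 2 + q r - 1) * Fp r) (Ici r₀) r)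
    (hFm : ∀ r ∈ Ici r₀, HasDerivWithinAt Fm (Fm' r) (Ici r₀) r)
    (hFm' : ∀ r ∈ Ici r₀, HasDerivWithinAt Fm'
      (((μ ^ 2 - 1 / 4) / (r : ℂ) ^ 2 + q r - 1) * Fm r) (Ici r₀) r)
    (hGp : ∀ r ∈ Ici r₀, HasDerivWithinAt Gp (Gp' r) (Ici r₀) r)
    (hGp' : ∀ r ∈ Ici r₀, HasDerivWithinAt Gp'
      (((μ ^ 2 - 1 / 4) / (r : ℂ) ^ 2 + qt r - 1) * Gp r) (Ici r₀) r)
    (hGm : ∀ r ∈ Ici r₀, HasDerivWithinAt Gm (Gm' r) (Ici r₀) r)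
    (hGm' : ∀ r ∈ Ici r₀, HasDerivWithinAt Gm'
      (((μ ^ 2 - 1 / 4) / (r : ℂ) ^ 2 + qt r - 1) * Gm r) (Ici r₀) r)
    (haFp : Tendsto (fun r : ℝ => Fp r * Complex.exp (-(Complex.I * r))) atTop (nhds 1))
    (haFp' : Tendsto (fun r : ℝ => Fp' r * Complex.exp (-(Complex.I * r))) atTop
      (nhds Complex.I))
    (haFm : Tendsto (fun r : ℝ => Fm r * Complex.exp (Complex.I * r)) atTop (nhds 1))
    (haFm' : Tendsto (fun r : ℝ => Fm' r * Complex.exp (Complex.I * r)) atTop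
      (nhds (-Complex.I)))
    (haGp : Tendsto (fun r : ℝ => Gp r * Complex.exp (-(Complex.I * r))) atTop (nhds 1))
    (haGp' : Tendsto (fun r : ℝ => Gp' r * Complex.exp (-(Complex.I * r))) atTop
      (nhds Complex.I))
    (haGm : Tendsto (fun r : ℝ => Gm r * Complex.exp (Complex.I * r)) atTop (nhds 1))
    (haGm' : Tendsto (fun r : ℝ => Gm' r * Complex.exp (Complex.I * r)) atTop
      (nhds (-Complex.I))) :
    (Complex.I * Fm r₀) * (-Complex.I * Gp r₀) - (Complex.I * Gm r₀) * (-Complex.I * Fp r₀)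
      = 1 / (2 * Complex.I) * ∫ r in Ioi r₀, (q r - qt r) *
          (Complex.I * (Fm r₀ * Fp r - Fp r₀ * Fm r)) *
          (Complex.I * (Gm r₀ * Gp r - Gp r₀ * Gm r)) := by
  set α : ℂ := Complex.I * Fm r₀ with hα
  set β : ℂ := -Complex.I * Fp r₀ with hβ
  set αt : ℂ := Complex.I * Gm r₀ with hαt
  set βt : ℂ := -Complex.I * Gp r₀ with hβt
  set P : ℝ → ℂ := fun r => α * Fp r + β * Fm r with hP
  set P' : ℝ → ℂ := fun r => α * Fp' r + β * Fm' r with hP'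
  set Q : ℝ → ℂ := fun r => αt * Gp r + βt * Gm r with hQ
  set Q' : ℝ → ℂ := fun r => αt * Gp' r + βt * Gm' r with hQ'
  have hint : ∀ r, (q r - qt r) * (Complex.I * (Fm r₀ * Fp r - Fp r₀ * Fm r)) *
      (Complex.I * (Gm r₀ * Gp r - Gp r₀ * Gm r)) = (q r - qt r) * P r * Q r := by
    intro r
    simp only [hP, hQ, hα, hβ, hαt, hβt]
    ring
  simp_rw [hint]
  have dP : ∀ r ∈ Ici r₀, HasDerivWithinAt P (P' r) (Ici r₀) r := fun r hr =>
    ((hFp r hr).const_mul α).add ((hFm r hr).const_mul β)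
  have dQ : ∀ r ∈ Ici r₀, HasDerivWithinAt Q (Q' r) (Ici r₀) r := fun r hr =>
    ((hGp r hr).const_mul αt).add ((hGm r hr).const_mul βt)
  have dP' : ∀ r ∈ Ici r₀, HasDerivWithinAt P'
      (((μ ^ 2 - 1 / 4) / (r : ℂ) ^ 2 + q r - 1) * P r) (Ici r₀) r := fun r hr =>
    (((hFp' r hr).const_mul α).add ((hFm' r hr).const_mul β)).congr_deriv (by
      simp only [hP]; ring)
  have dQ' : ∀ r ∈ Ici r₀, HasDerivWithinAt Q'
      (((μ ^ 2 - 1 / 4) / (r : ℂ) ^ 2 + qt r - 1) * Q r) (Ici r₀) r := fun r hr =>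
    (((hGp' r hr).const_mul αt).add ((hGm' r hr).const_mul βt)).congr_deriv (by
      simp only [hQ]; ring)
  -- Lagrange's identity: the centrifugal and energy terms cancel.
  have dW : ∀ r ∈ Ici r₀, HasDerivWithinAt (fun r => P' r * Q r - P r * Q' r)
      ((q r - qt r) * P r * Q r) (Ici r₀) r := fun r hr =>
    (((dP' r hr).mul (dQ r hr)).sub ((dP r hr).mul (dQ' r hr))).congr_deriv (by ring)
  have cont : ContinuousOn (fun r => (q r - qt r) * P r * Q r) (Ici r₀) :=
    ((hq.sub hqt).mul fun r hr => (dP r hr).continuousWithinAt).mul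
      fun r hr => (dQ r hr).continuousWithinAt
  have integrable : IntegrableOn (fun r => (q r - qt r) * P r * Q r) (Ioi r₀) := by
    have h1 : IntegrableOn (fun r => (q r - qt r) * P r * Q r) (Icc r₀ R) :=
      (cont.mono Icc_subset_Ici_self).integrableOn_Icc
    refine h1.of_forall_sdiff_eq_zero measurableSet_Ioi fun r hr => ?_
    have hRr : R ≤ r := by
      by_contra hlt
      exact hr.2 ⟨(mem_Ioi.mp hr.1).le, (not_le.mp hlt).le⟩
    simp [hqsupp r hRr, hqtsupp r hRr]
  have nE : ∀ r : ℝ, ‖Complex.exp (Complex.I * r)‖ = 1 := fun r => by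
    rw [mul_comm]; exact Complex.norm_exp_ofReal_mul_I r
  have nE' : ∀ r : ℝ, ‖Complex.exp (-(Complex.I * r))‖ = 1 := fun r => by
    rw [Complex.exp_neg, norm_inv, nE, inv_one]
  have mE : ∀ r : ℝ, Complex.exp (-(Complex.I * r)) * Complex.exp (Complex.I * r) = 1 :=
    fun r => by rw [← Complex.exp_add]; simp
  have mE' : ∀ r : ℝ, Complex.exp (Complex.I * r) * Complex.exp (-(Complex.I * r)) = 1 :=
    fun r => by rw [← Complex.exp_add]; simp
  have lpp := tendsto_wronskian_zero nE' (by ring) haFp haFp' haGp haGp'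
  have lmm := tendsto_wronskian_zero nE (by ring) haFm haFm' haGm haGm'
  have lpm := tendsto_wronskian_of_mul_eq_one mE haFp haFp' haGm haGm'
  have lmp := tendsto_wronskian_of_mul_eq_one mE' haFm haFm' haGp haGp'
  have lim : Tendsto (fun r => P' r * Q r - P r * Q' r) atTop
      (nhds (2 * Complex.I * (α * βt - αt * β))) := by
    have h := ((((lpp.const_mul (α * αt)).add (lmm.const_mul (β * βt))).add
      (lpm.const_mul (α * βt))).add (lmp.const_mul (β * αt))).neg
    convert h using 2
    · simp only [hP, hP', hQ, hQ']; ring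
    · ring
  have key := integral_Ioi_of_hasDerivAt_of_tendsto
    (dW r₀ self_mem_Ici).continuousWithinAt
    (fun r hr => (dW r (Ioi_subset_Ici_self hr)).hasDerivAt (Ici_mem_nhds hr)) integrable lim
  have hP0 : P r₀ = 0 := by simp only [hP, hα, hβ]; ring
  have hQ0 : Q r₀ = 0 := by simp only [hQ, hαt, hβt]; ring
  rw [key, hP0, hQ0]
  have hI := Complex.I_ne_zero
  field_simp
  ring
end
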